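/- arXiv:2402.02459 — 2 statements merged into one kernel-verified Lean document; each statement's English description precedes it below -/
import Mathlib

section
/- Let Σ ∈ S^p_+ be given. For τ > 0 let L̂(τ) be the first component of the unique minimizer of F(L,D) = τ‖L‖_* + (1/2)‖Σ − (L+D)‖_F² over L ∈ S^p_+ and diagonal D, and let L̃ be the (unique) first component of the solution of the MTFA problem: minimize tr(L) over L ∈ S^p_+ and diagonal D subject to Σ = L + D. Then L̂(τ) → L̃ as τ → 0⁺. -/
open Matrix MeasureTheory ProbabilityTheory BigOperators

/-- `pdiag M`: the matrix `M` with all off-diagonal entries set to zero. -/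
def pdiag {p : ℕ} (M : Matrix (Fin p) (Fin p) ℝ) : Matrix (Fin p) (Fin p) ℝ :=
  Matrix.of fun i j => if i = j then M i j else 0

/-- `poffdiag M = M - pdiag M`: the off-diagonal part of `M`. -/
def poffdiag {p : ℕ} (M : Matrix (Fin p) (Fin p) ℝ) : Matrix (Fin p) (Fin p) ℝ :=
  M - pdiag M

/-- Frobenius norm of a real matrix. -/
noncomputable def frobNorm {p q : ℕ} (M : Matrix (Fin p) (Fin q) ℝ) : ℝ :=
  Real.sqrt (∑ i, ∑ j, (M i j) ^ 2)

/-- The singular values of a real matrix (as the square roots of the eigenvalues of `Mᵀ M`,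
in no particular order, with multiplicity, padded by zeros). -/
noncomputable def singVals {p q : ℕ} (M : Matrix (Fin p) (Fin q) ℝ) : Fin q → ℝ :=
  fun i => Real.sqrt ((Matrix.posSemidef_conjTranspose_mul_self M).isHermitian.eigenvalues i)

/-- Nuclear norm: sum of the singular values. -/
noncomputable def nucNorm {p q : ℕ} (M : Matrix (Fin p) (Fin q) ℝ) : ℝ :=
  ∑ i, singVals M i

/-- Spectral (operator) norm: the largest singular value. -/
noncomputable def specNorm {p q : ℕ} (M : Matrix (Fin p) (Fin q) ℝ) : ℝ :=
  ⨆ i, singVals M i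

/-- `(2,∞)`-norm: the maximal Euclidean norm of a row. -/
noncomputable def rowNorm {p r : ℕ} (U : Matrix (Fin p) (Fin r) ℝ) : ℝ :=
  ⨆ i, Real.sqrt (∑ j, (U i j) ^ 2)

/-- `sinΘ` distance between two column-orthonormal matrices, measured in spectral norm:
`‖sinΘ(U, V)‖ = ‖U Uᵀ - V Vᵀ‖`. -/
noncomputable def sinTheta {p r : ℕ} (U V : Matrix (Fin p) (Fin r) ℝ) : ℝ :=
  specNorm (U * Uᵀ - V * Vᵀ)

/-- `eigDesc M k` : the `k`-th largest eigenvalue (1-indexed) of a symmetric matrix `M`. -/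
noncomputable def eigDesc {p : ℕ} (M : Matrix (Fin p) (Fin p) ℝ) (k : ℕ) : ℝ :=
  if h : M.IsHermitian then
    (((List.ofFn h.eigenvalues).insertionSort (· ≥ ·)).getD (k - 1) 0)
  else 0

/-- `svDesc M k` : the `k`-th largest singular value (1-indexed) of `M`. -/
noncomputable def svDesc {p q : ℕ} (M : Matrix (Fin p) (Fin q) ℝ) (k : ℕ) : ℝ :=
  (((List.ofFn (singVals M)).insertionSort (· ≥ ·)).getD (k - 1) 0)

/-- Eigenvalue soft-thresholding operator `D_τ⁺`: for a symmetric matrix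
`M = Σᵢ λᵢ uᵢ uᵢᵀ`, `D_τ⁺(M) = Σᵢ max (λᵢ - τ) 0 • uᵢ uᵢᵀ` (junk value `0` otherwise). -/
noncomputable def softThresh {p : ℕ} (τ : ℝ) (M : Matrix (Fin p) (Fin p) ℝ) :
    Matrix (Fin p) (Fin p) ℝ :=
  if h : M.IsHermitian then
    (h.eigenvectorUnitary : Matrix (Fin p) (Fin p) ℝ) *
      Matrix.diagonal (fun i => max (h.eigenvalues i - τ) 0) *
      (star (h.eigenvectorUnitary : Matrix (Fin p) (Fin p) ℝ))
  else 0

/-- The `p × r` matrix whose columns are (orthonormal) eigenvectors of the symmetric matrix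
`M` corresponding to its `r` largest eigenvalues ("first `r` eigenvectors"). -/
noncomputable def topEigenvectors {p : ℕ} (M : Matrix (Fin p) (Fin p) ℝ) (r : ℕ) :
    Matrix (Fin p) (Fin r) ℝ :=
  if h : M.IsHermitian then
    Matrix.of fun i (j : Fin r) =>
      if hj : (j : ℕ) < p then
        (h.eigenvectorUnitary : Matrix (Fin p) (Fin p) ℝ) i
          ((Tuple.sort h.eigenvalues) (Fin.rev ⟨(j : ℕ), hj⟩))
      else 0
  else 0

/-- The objective function `F(L, D) = τ ‖L‖_* + (1/2) ‖Σ - (L + D)‖_F²`. -/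
noncomputable def objF {p : ℕ} (τ : ℝ) (S L D : Matrix (Fin p) (Fin p) ℝ) : ℝ :=
  τ * nucNorm L + (1 / 2) * (frobNorm (S - (L + D))) ^ 2

/-- `(L, D)` is a global minimizer of the relaxed-MTFA objective `F` over
`L ∈ S^p₊` and diagonal `D`. -/
def IsRMTFAMin {p : ℕ} (τ : ℝ) (S L D : Matrix (Fin p) (Fin p) ℝ) : Prop :=
  L.PosSemidef ∧ D = pdiag D ∧
    ∀ L' D' : Matrix (Fin p) (Fin p) ℝ, L'.PosSemidef → D' = pdiag D' →
      objF τ S L D ≤ objF τ S L' D'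

/-!
The optimality conditions of the relaxed problem say that `W = 1 + τ⁻¹ (L + D - S)` is a positive
semidefinite matrix with unit diagonal and `W L = 0`. The residual is thus of order `τ`, and
`L₁ = L + τ (tr W - W)` is an MTFA-feasible point at distance `O(τ)` from `L`.
If `L₀` is the MTFA solution, then `L₁ - L₀` is diagonal, and a diagonal matrix `E` satisfies
`tr (W E) = tr E` and `‖E‖ ≤ ‖W E‖`. The first fact and the optimality of `L₀` give
`tr (W L₀) ≤ tr (W L₁) = O(τ)`. For positive semidefinite matrices
`‖W L₀‖² ≤ tr W · tr (W L₀) · tr L₀`, so the second fact gives `‖L₁ - L₀‖ = O(√τ)`.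
-/

open Filter Topology

section FrobeniusNorm

open scoped MatrixOrder Matrix.Norms.Frobenius ComplexOrder

variable {m n 𝕜 : Type*} [Fintype m] [Fintype n] [RCLike 𝕜] {A B : Matrix n n 𝕜}

lemma trace_conjTranspose_mul_self_eq_frobenius_norm_sq (M : Matrix m n 𝕜) :
    (Mᴴ * M).trace = ((‖M‖ ^ 2 : ℝ) : 𝕜) := by
  rw [frobenius_norm_def, ← Real.sqrt_eq_rpow, Real.sq_sqrt (by positivity)]
  simp only [trace, diag_apply, mul_apply, conjTranspose_apply, RCLike.star_def,
    RCLike.conj_mul, Real.rpow_two, RCLike.ofReal_sum, RCLike.ofReal_pow]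
  exact Finset.sum_comm

lemma frobenius_norm_sq_eq_re_trace (M : Matrix m n 𝕜) :
    ‖M‖ ^ 2 = RCLike.re (Mᴴ * M).trace := by
  rw [trace_conjTranspose_mul_self_eq_frobenius_norm_sq, RCLike.ofReal_re]

lemma frobenius_norm_sub_smul_sq (M N : Matrix m n ℝ) (t : ℝ) :
    ‖M - t • N‖ ^ 2 = ‖M‖ ^ 2 - 2 * t * (Mᵀ * N).trace + t ^ 2 * ‖N‖ ^ 2 := by
  have hcomm : (Nᵀ * M).trace = (Mᵀ * N).trace := by
    rw [← trace_transpose, transpose_mul, transpose_transpose]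
  simp only [frobenius_norm_sq_eq_re_trace, RCLike.re_to_real,
    conjTranspose_eq_transpose_of_trivial, transpose_sub, transpose_smul, Matrix.sub_mul,
    Matrix.mul_sub, Matrix.smul_mul, Matrix.mul_smul, trace_sub, trace_smul, smul_eq_mul, hcomm]
  ring

lemma exists_eq_conjTranspose_mul_self (hA : A.PosSemidef) : ∃ C : Matrix n n 𝕜, A = Cᴴ * C := by
  classical exact CStarAlgebra.nonneg_iff_eq_star_mul_self.mp hA.nonneg

lemma frobenius_norm_le_re_trace (hA : A.PosSemidef) : ‖A‖ ≤ RCLike.re A.trace := by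
  obtain ⟨C, rfl⟩ := exists_eq_conjTranspose_mul_self hA
  calc ‖Cᴴ * C‖ ≤ ‖Cᴴ‖ * ‖C‖ := frobenius_norm_mul _ _
    _ = RCLike.re (Cᴴ * C).trace := by
      rw [frobenius_norm_conjTranspose, ← sq, frobenius_norm_sq_eq_re_trace]

lemma frobenius_norm_mul_sq_le_re_trace (hA : A.PosSemidef) (hB : B.PosSemidef) :
    ‖A * B‖ ^ 2 ≤ RCLike.re A.trace * RCLike.re (A * B).trace * RCLike.re B.trace := by
  obtain ⟨C, rfl⟩ := exists_eq_conjTranspose_mul_self hA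
  obtain ⟨E, rfl⟩ := exists_eq_conjTranspose_mul_self hB
  have hCE : RCLike.re (Cᴴ * C * (Eᴴ * E)).trace = ‖C * Eᴴ‖ ^ 2 := by
    rw [frobenius_norm_sq_eq_re_trace, ← mul_assoc, trace_mul_comm, conjTranspose_mul,
      conjTranspose_conjTranspose]
    simp only [mul_assoc]
  rw [hCE, ← frobenius_norm_sq_eq_re_trace, ← frobenius_norm_sq_eq_re_trace, ← mul_pow, ← mul_pow]
  gcongr
  calc ‖Cᴴ * C * (Eᴴ * E)‖ = ‖Cᴴ * (C * Eᴴ) * E‖ := by simp only [mul_assoc]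
    _ ≤ ‖Cᴴ‖ * ‖C * Eᴴ‖ * ‖E‖ :=
      (frobenius_norm_mul _ _).trans (by gcongr; exact frobenius_norm_mul _ _)
    _ = ‖C‖ * ‖C * Eᴴ‖ * ‖E‖ := by rw [frobenius_norm_conjTranspose]

lemma mul_eq_zero_of_re_trace_mul_nonpos (hA : A.PosSemidef) (hB : B.PosSemidef)
    (hAB : RCLike.re (A * B).trace ≤ 0) : A * B = 0 := by
  have hA0 : 0 ≤ RCLike.re A.trace := (norm_nonneg A).trans (frobenius_norm_le_re_trace hA)
  have hB0 : 0 ≤ RCLike.re B.trace := (norm_nonneg B).trans (frobenius_norm_le_re_trace hB)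
  have hle : ‖A * B‖ ^ 2 ≤ 0 := (frobenius_norm_mul_sq_le_re_trace hA hB).trans
    (mul_nonpos_of_nonpos_of_nonneg (mul_nonpos_of_nonneg_of_nonpos hA0 hAB) hB0)
  exact norm_eq_zero.mp (pow_eq_zero_iff two_ne_zero |>.mp (hle.antisymm (sq_nonneg _)))

lemma posSemidef_trace_smul_one_sub [DecidableEq n] (hA : A.PosSemidef) :
    (A.trace • (1 : Matrix n n 𝕜) - A).PosSemidef := by
  have htrace : A.trace = ((∑ i, hA.isHermitian.eigenvalues i : ℝ) : 𝕜) := by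
    rw [hA.isHermitian.trace_eq_sum_eigenvalues, RCLike.ofReal_sum]
  have hle : A ≤ algebraMap ℝ (Matrix n n 𝕜) (∑ i, hA.isHermitian.eigenvalues i) := by
    refine le_algebraMap_of_spectrum_le (fun x hx => ?_) hA.isHermitian
    rw [hA.isHermitian.spectrum_real_eq_range_eigenvalues] at hx
    obtain ⟨i, rfl⟩ := hx
    exact Finset.single_le_sum (fun j _ => hA.eigenvalues_nonneg j) (Finset.mem_univ i)
  rw [htrace]
  rwa [Algebra.algebraMap_eq_smul_one, RCLike.real_smul_eq_coe_smul (K := 𝕜), Matrix.le_iff] at hle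

lemma posSemidef_of_forall_trace_mul_nonneg (hA : A.IsHermitian)
    (h : ∀ X : Matrix n n 𝕜, X.PosSemidef → 0 ≤ (A * X).trace) : A.PosSemidef := by
  refine .of_dotProduct_mulVec_nonneg hA fun x => ?_
  have hx := h _ (posSemidef_vecMulVec_self_star x)
  rwa [mul_vecMulVec, trace_vecMulVec, dotProduct_comm] at hx

end FrobeniusNorm

section UnitDiagonal

open scoped Matrix.Norms.Frobenius

variable {n R : Type*} [Fintype n] {A E : Matrix n n R}

lemma mul_apply_of_isDiag [NonUnitalNonAssocSemiring R] (A : Matrix n n R) (hE : E.IsDiag)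
    (i j : n) : (A * E) i j = A i j * E j j := by
  rw [mul_apply]
  exact Fintype.sum_eq_single j fun k hk => by rw [hE hk, mul_zero]

lemma trace_mul_of_isDiag_of_diag_eq_one [NonAssocSemiring R] (hA : ∀ i, A i i = 1)
    (hE : E.IsDiag) : (A * E).trace = E.trace := by
  simp only [trace, diag_apply, mul_apply_of_isDiag A hE, hA, one_mul]

lemma frobenius_norm_le_norm_mul_of_isDiag [NormedRing R] (hA : ∀ i, A i i = 1)
    (hE : E.IsDiag) : ‖E‖ ≤ ‖A * E‖ := by
  rw [frobenius_norm_def, frobenius_norm_def]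
  gcongr with i _ j _
  rcases eq_or_ne i j with rfl | hij
  · rw [mul_apply_of_isDiag A hE, hA, one_mul]
  · rw [hE hij, norm_zero]
    exact norm_nonneg _

end UnitDiagonal

lemma nonneg_of_forall_nonneg_add_mul {a b : ℝ}
    (h : ∀ t ∈ Set.Ioc (0 : ℝ) 1, 0 ≤ a + t * b) : 0 ≤ a := by
  have hlim : Tendsto (fun t : ℝ => a + t * b) (𝓝[>] 0) (𝓝 (a + 0 * b)) :=
    (Continuous.tendsto (by fun_prop) 0).mono_left nhdsWithin_le_nhds
  rw [zero_mul, add_zero] at hlim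
  exact ge_of_tendsto hlim (eventually_of_mem (Ioc_mem_nhdsGT one_pos) h)

section Objective

open scoped MatrixOrder Matrix.Norms.Frobenius

variable {p q : ℕ} {τ : ℝ} {S L D : Matrix (Fin p) (Fin p) ℝ}

lemma eq_pdiag_iff_isDiag {M : Matrix (Fin p) (Fin p) ℝ} : M = pdiag M ↔ M.IsDiag := by
  have hpdiag : pdiag M = diagonal M.diag := by
    ext i j
    rcases eq_or_ne i j with rfl | hij <;> simp [pdiag, *]
  rw [hpdiag, eq_comm, isDiag_iff_diagonal_diag]

lemma frobNorm_eq_norm (M : Matrix (Fin p) (Fin q) ℝ) : frobNorm M = ‖M‖ := by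
  simp [frobNorm, frobenius_norm_def, Real.sqrt_eq_rpow]

lemma nucNorm_eq_trace (hL : L.PosSemidef) : nucNorm L = L.trace := by
  have hGram := posSemidef_conjTranspose_mul_self L
  have hsqrt : CFC.sqrt (Lᴴ * L) = L := by
    rw [hL.isHermitian.eq, CFC.sqrt_mul_self L hL.nonneg]
  have htrace : (CFC.sqrt (Lᴴ * L)).trace = nucNorm L := by
    rw [CFC.sqrt_eq_real_sqrt _ hGram.nonneg, cfcₙ_eq_cfc, hGram.isHermitian.cfc_eq,
      Matrix.IsHermitian.cfc, Unitary.conjStarAlgAut_apply, trace_mul_comm, ← mul_assoc]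
    simp [trace, nucNorm, singVals]
  rw [← htrace, hsqrt]

lemma objF_of_posSemidef (hL : L.PosSemidef) :
    objF τ S L D = τ * L.trace + 1 / 2 * ‖S - (L + D)‖ ^ 2 := by
  rw [objF, nucNorm_eq_trace hL, frobNorm_eq_norm]

end Objective

/-- `(L, D)` solves the MTFA problem: minimize `tr L` over `L ∈ S^p₊` and diagonal `D` subject to
`S = L + D`. Diagonality is encoded by `D = pdiag D`, as in `IsRMTFAMin`. -/
def IsMTFAMin {p : ℕ} (S L D : Matrix (Fin p) (Fin p) ℝ) : Prop :=
  L.PosSemidef ∧ D = pdiag D ∧ S = L + D ∧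
    ∀ L' D' : Matrix (Fin p) (Fin p) ℝ, L'.PosSemidef → D' = pdiag D' → S = L' + D' →
      L.trace ≤ L'.trace

/-- The dual certificate `W` attached to `(L, D)`: the gradient in `L` of
`tr L + ‖S - (L + D)‖² / (2 τ)`, which is the objective divided by `τ` on the positive semidefinite
cone. At a minimizer it is a correlation matrix with `W L = 0`. -/
noncomputable def dualCertificate {p : ℕ} (τ : ℝ) (S L D : Matrix (Fin p) (Fin p) ℝ) :
    Matrix (Fin p) (Fin p) ℝ :=
  1 + τ⁻¹ • (L + D - S)

/-- A correction `L + τ (tr W - W)` of `L`, where `W` is the dual certificate. At a minimizer the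
summand `- τ W` makes `S` minus the correction diagonal, and `τ tr W` restores positive
semidefiniteness, so that the correction is feasible for the MTFA problem. -/
noncomputable def feasibleCorrection {p : ℕ} (τ : ℝ) (S L D : Matrix (Fin p) (Fin p) ℝ) :
    Matrix (Fin p) (Fin p) ℝ :=
  L + τ • ((dualCertificate τ S L D).trace • 1 - dualCertificate τ S L D)

lemma smul_dualCertificate_sub_one {p : ℕ} {τ : ℝ} (hτ : τ ≠ 0)
    (S L D : Matrix (Fin p) (Fin p) ℝ) :
    τ • (dualCertificate τ S L D - 1) = L + D - S := by
  rw [dualCertificate, add_sub_cancel_left, smul_inv_smul₀ hτ]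

lemma isDiag_sub_feasibleCorrection {p : ℕ} {τ : ℝ} (hτ : τ ≠ 0)
    {S L D : Matrix (Fin p) (Fin p) ℝ} (hD : D.IsDiag) :
    (S - feasibleCorrection τ S L D).IsDiag := by
  have hS : S - feasibleCorrection τ S L D
      = D - (τ * ((dualCertificate τ S L D).trace - 1)) • 1 := by
    rw [feasibleCorrection]
    linear_combination (norm := module) smul_dualCertificate_sub_one hτ S L D
  rw [hS]
  exact hD.sub (isDiag_smul_one _ _)

namespace IsMTFAMin

variable {p : ℕ} {S L D : Matrix (Fin p) (Fin p) ℝ}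

lemma isHermitian (h : IsMTFAMin S L D) : S.IsHermitian := by
  obtain ⟨hL, hD, rfl, -⟩ := h
  exact hL.isHermitian.add (isHermitian_iff_isSymm.mpr (eq_pdiag_iff_isDiag.mp hD).isSymm)

lemma isDiag_sub (h : IsMTFAMin S L D) : (S - L).IsDiag := by
  obtain ⟨-, hD, rfl, -⟩ := h
  rw [add_sub_cancel_left]
  exact eq_pdiag_iff_isDiag.mp hD

lemma trace_le (h : IsMTFAMin S L D) {L' : Matrix (Fin p) (Fin p) ℝ} (hL' : L'.PosSemidef)
    (hdiag : (S - L').IsDiag) : L.trace ≤ L'.trace :=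
  h.2.2.2 L' (S - L') hL' (eq_pdiag_iff_isDiag.mpr hdiag) (add_sub_cancel L' S).symm

end IsMTFAMin

namespace IsRMTFAMin

open scoped Matrix.Norms.Frobenius

variable {p : ℕ} {τ : ℝ} {S L D : Matrix (Fin p) (Fin p) ℝ}

lemma isDiag (h : IsRMTFAMin τ S L D) : D.IsDiag := eq_pdiag_iff_isDiag.mp h.2.1

lemma variational_inequality (h : IsRMTFAMin τ S L D) {L' D' : Matrix (Fin p) (Fin p) ℝ}
    (hL' : L'.PosSemidef) (hD' : D'.IsDiag) :
    0 ≤ τ * (L' - L).trace + ((L + D - S)ᵀ * (L' - L + (D' - D))).trace := by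
  refine nonneg_of_forall_nonneg_add_mul (b := ‖L' - L + (D' - D)‖ ^ 2 / 2) fun t ⟨ht, ht1⟩ => ?_
  have hLt : (L + t • (L' - L)).PosSemidef := by
    rw [show L + t • (L' - L) = (1 - t) • L + t • L' by module]
    exact (h.1.smul (sub_nonneg.mpr ht1)).add (hL'.smul ht.le)
  have hDt : (D + t • (D' - D)).IsDiag := h.isDiag.add ((hD'.sub h.isDiag).smul t)
  have hmin := h.2.2 _ _ hLt (eq_pdiag_iff_isDiag.mpr hDt)
  rw [objF_of_posSemidef h.1, objF_of_posSemidef hLt,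
    show S - (L + t • (L' - L) + (D + t • (D' - D)))
      = S - (L + D) - t • (L' - L + (D' - D)) by module,
    frobenius_norm_sub_smul_sq, trace_add, trace_smul, smul_eq_mul,
    show S - (L + D) = -(L + D - S) by abel, transpose_neg, neg_mul, trace_neg] at hmin
  refine nonneg_of_mul_nonneg_right ?_ ht
  linarith

lemma residual_apply_self (h : IsRMTFAMin τ S L D) (i : Fin p) : (L + D - S) i i = 0 := by
  set R := L + D - S with hR
  have hvar := h.variational_inequality h.1 (h.isDiag.sub (isDiag_diagonal R.diag))
  have hsum : ∑ i, R i i ^ 2 ≤ 0 := by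
    rw [← hR, sub_self, sub_sub_cancel_left, zero_add, trace_zero, mul_zero, zero_add, mul_neg,
      trace_neg] at hvar
    simpa [trace, sq] using hvar
  have hzero := (Finset.sum_eq_zero_iff_of_nonneg fun i _ => sq_nonneg (R i i)).mp
    (hsum.antisymm (Finset.sum_nonneg fun i _ => sq_nonneg _))
  exact pow_eq_zero_iff two_ne_zero |>.mp (hzero i (Finset.mem_univ i))

lemma dualCertificate_apply_self (h : IsRMTFAMin τ S L D) (i : Fin p) :
    dualCertificate τ S L D i i = 1 := by
  rw [dualCertificate, Matrix.add_apply, Matrix.smul_apply, h.residual_apply_self, one_apply_eq,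
    smul_zero, add_zero]

lemma trace_dualCertificate (h : IsRMTFAMin τ S L D) : (dualCertificate τ S L D).trace = p := by
  simp [trace, h.dualCertificate_apply_self]

lemma isHermitian_dualCertificate (h : IsRMTFAMin τ S L D) (hS : S.IsHermitian) :
    (dualCertificate τ S L D).IsHermitian :=
  isHermitian_one.add
    (((h.1.isHermitian.add (isHermitian_iff_isSymm.mpr h.isDiag.isSymm)).sub hS).smul (.all _))

lemma trace_dualCertificate_mul_le (h : IsRMTFAMin τ S L D) (hτ : 0 < τ) (hS : S.IsHermitian)
    {L' : Matrix (Fin p) (Fin p) ℝ} (hL' : L'.PosSemidef) :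
    (dualCertificate τ S L D * L).trace ≤ (dualCertificate τ S L D * L').trace := by
  have hR : (L + D - S)ᵀ = τ • (dualCertificate τ S L D - 1) := by
    rw [← smul_dualCertificate_sub_one hτ.ne' S L D, transpose_smul, transpose_sub, transpose_one,
      ← conjTranspose_eq_transpose_of_trivial, (h.isHermitian_dualCertificate hS).eq]
  have hvar := h.variational_inequality hL' h.isDiag
  rw [sub_self, add_zero, hR, smul_mul, trace_smul, smul_eq_mul, sub_mul, one_mul,
    trace_sub _ (L' - L), ← mul_add, add_sub_cancel, mul_sub, trace_sub] at hvar
  exact sub_nonneg.mp (nonneg_of_mul_nonneg_right hvar hτ)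

lemma posSemidef_dualCertificate (h : IsRMTFAMin τ S L D) (hτ : 0 < τ) (hS : S.IsHermitian) :
    (dualCertificate τ S L D).PosSemidef := by
  refine posSemidef_of_forall_trace_mul_nonneg (h.isHermitian_dualCertificate hS) fun X hX => ?_
  have hLX := h.trace_dualCertificate_mul_le hτ hS (h.1.add hX)
  rwa [mul_add, trace_add, le_add_iff_nonneg_right] at hLX

lemma dualCertificate_mul_eq_zero (h : IsRMTFAMin τ S L D) (hτ : 0 < τ) (hS : S.IsHermitian) :
    dualCertificate τ S L D * L = 0 := by
  refine mul_eq_zero_of_re_trace_mul_nonpos (h.posSemidef_dualCertificate hτ hS) h.1 ?_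
  simpa using h.trace_dualCertificate_mul_le hτ hS PosSemidef.zero

lemma posSemidef_feasibleCorrection_sub (h : IsRMTFAMin τ S L D) (hτ : 0 < τ)
    (hS : S.IsHermitian) : (feasibleCorrection τ S L D - L).PosSemidef := by
  rw [feasibleCorrection, add_sub_cancel_left]
  exact (posSemidef_trace_smul_one_sub (h.posSemidef_dualCertificate hτ hS)).smul hτ.le

lemma posSemidef_feasibleCorrection (h : IsRMTFAMin τ S L D) (hτ : 0 < τ) (hS : S.IsHermitian) :
    (feasibleCorrection τ S L D).PosSemidef := by
  simpa using h.1.add (h.posSemidef_feasibleCorrection_sub hτ hS)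

lemma norm_feasibleCorrection_sub_le (h : IsRMTFAMin τ S L D) (hτ : 0 < τ) (hS : S.IsHermitian) :
    ‖feasibleCorrection τ S L D - L‖ ≤ τ * p ^ 2 := by
  calc ‖feasibleCorrection τ S L D - L‖ ≤ (feasibleCorrection τ S L D - L).trace :=
        frobenius_norm_le_re_trace (h.posSemidef_feasibleCorrection_sub hτ hS)
    _ = τ * (p * p - p) := by
      rw [feasibleCorrection, add_sub_cancel_left, trace_smul, trace_sub, trace_smul, trace_one,
        h.trace_dualCertificate, Fintype.card_fin, smul_eq_mul, smul_eq_mul]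
    _ ≤ τ * p ^ 2 := by
      gcongr
      rw [sq]
      exact sub_le_self _ p.cast_nonneg

lemma dualCertificate_mul_feasibleCorrection (h : IsRMTFAMin τ S L D) (hτ : 0 < τ)
    (hS : S.IsHermitian) :
    dualCertificate τ S L D * feasibleCorrection τ S L D
      = dualCertificate τ S L D * (feasibleCorrection τ S L D - L) := by
  rw [mul_sub, h.dualCertificate_mul_eq_zero hτ hS, sub_zero]

lemma norm_dualCertificate_mul_feasibleCorrection_le (h : IsRMTFAMin τ S L D) (hτ : 0 < τ)
    (hS : S.IsHermitian) :
    ‖dualCertificate τ S L D * feasibleCorrection τ S L D‖ ≤ τ * p ^ 3 := by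
  have hW : ‖dualCertificate τ S L D‖ ≤ p := by
    simpa [h.trace_dualCertificate] using
      frobenius_norm_le_re_trace (h.posSemidef_dualCertificate hτ hS)
  rw [h.dualCertificate_mul_feasibleCorrection hτ hS]
  calc ‖dualCertificate τ S L D * (feasibleCorrection τ S L D - L)‖
      ≤ ‖dualCertificate τ S L D‖ * ‖feasibleCorrection τ S L D - L‖ := frobenius_norm_mul _ _
    _ ≤ p * (τ * p ^ 2) := by gcongr; exact h.norm_feasibleCorrection_sub_le hτ hS
    _ = τ * p ^ 3 := by ring

lemma trace_dualCertificate_mul_feasibleCorrection_le (h : IsRMTFAMin τ S L D) (hτ : 0 < τ)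
    (hS : S.IsHermitian) :
    (dualCertificate τ S L D * feasibleCorrection τ S L D).trace ≤ τ * p ^ 2 := by
  have hsq : 0 ≤ (dualCertificate τ S L D * dualCertificate τ S L D).trace := by
    simpa only [(h.isHermitian_dualCertificate hS).eq] using
      (posSemidef_conjTranspose_mul_self (dualCertificate τ S L D)).trace_nonneg
  rw [h.dualCertificate_mul_feasibleCorrection hτ hS, feasibleCorrection, add_sub_cancel_left,
    Matrix.mul_smul, trace_smul, smul_eq_mul, mul_sub, Matrix.mul_smul, mul_one, trace_sub,
    trace_smul, h.trace_dualCertificate, smul_eq_mul, sq]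
  gcongr
  exact sub_le_self _ hsq

variable {L₀ D₀ : Matrix (Fin p) (Fin p) ℝ}

lemma isDiag_feasibleCorrection_sub (h : IsRMTFAMin τ S L D) (hτ : 0 < τ)
    (h₀ : IsMTFAMin S L₀ D₀) : (feasibleCorrection τ S L D - L₀).IsDiag := by
  simpa using h₀.isDiag_sub.sub (isDiag_sub_feasibleCorrection hτ.ne' (S := S) (L := L) h.isDiag)

lemma trace_dualCertificate_mul_mtfaMin_le (h : IsRMTFAMin τ S L D) (hτ : 0 < τ)
    (h₀ : IsMTFAMin S L₀ D₀) : (dualCertificate τ S L D * L₀).trace ≤ τ * p ^ 2 := by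
  have hS := h₀.isHermitian
  have hopt : L₀.trace ≤ (feasibleCorrection τ S L D).trace :=
    h₀.trace_le (h.posSemidef_feasibleCorrection hτ hS)
      (isDiag_sub_feasibleCorrection hτ.ne' h.isDiag)
  have hdiff := trace_mul_of_isDiag_of_diag_eq_one h.dualCertificate_apply_self
    (h.isDiag_feasibleCorrection_sub hτ h₀)
  rw [mul_sub, trace_sub, trace_sub] at hdiff
  linarith [h.trace_dualCertificate_mul_feasibleCorrection_le hτ hS]

lemma norm_dualCertificate_mul_mtfaMin_le (h : IsRMTFAMin τ S L D) (hτ : 0 < τ)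
    (h₀ : IsMTFAMin S L₀ D₀) :
    ‖dualCertificate τ S L D * L₀‖ ≤ √(τ * (p ^ 3 * L₀.trace)) := by
  refine Real.le_sqrt_of_sq_le ?_
  calc ‖dualCertificate τ S L D * L₀‖ ^ 2
      ≤ (dualCertificate τ S L D).trace * (dualCertificate τ S L D * L₀).trace * L₀.trace :=
        frobenius_norm_mul_sq_le_re_trace (h.posSemidef_dualCertificate hτ h₀.isHermitian) h₀.1
    _ ≤ p * (τ * p ^ 2) * L₀.trace := by
      rw [h.trace_dualCertificate]
      gcongr
      · exact h₀.1.trace_nonneg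
      · exact h.trace_dualCertificate_mul_mtfaMin_le hτ h₀
    _ = τ * (p ^ 3 * L₀.trace) := by ring

theorem frobNorm_sub_le (h : IsRMTFAMin τ S L D) (hτ : 0 < τ) (h₀ : IsMTFAMin S L₀ D₀) :
    frobNorm (L - L₀) ≤ τ * p ^ 2 + (τ * p ^ 3 + √(τ * (p ^ 3 * L₀.trace))) := by
  set W := dualCertificate τ S L D
  set L₁ := feasibleCorrection τ S L D
  have hS := h₀.isHermitian
  have hdiag : ‖L₁ - L₀‖ ≤ ‖W * L₁‖ + ‖W * L₀‖ :=
    calc ‖L₁ - L₀‖ ≤ ‖W * (L₁ - L₀)‖ :=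
          frobenius_norm_le_norm_mul_of_isDiag h.dualCertificate_apply_self
            (h.isDiag_feasibleCorrection_sub hτ h₀)
      _ ≤ ‖W * L₁‖ + ‖W * L₀‖ := by rw [mul_sub]; exact norm_sub_le _ _
  calc frobNorm (L - L₀) = ‖L - L₀‖ := frobNorm_eq_norm _
    _ ≤ ‖L₁ - L‖ + ‖L₁ - L₀‖ := by
      rw [norm_sub_rev L₁ L]
      exact norm_sub_le_norm_sub_add_norm_sub _ _ _
    _ ≤ ‖L₁ - L‖ + (‖W * L₁‖ + ‖W * L₀‖) := by gcongr
    _ ≤ τ * p ^ 2 + (τ * p ^ 3 + √(τ * (p ^ 3 * L₀.trace))) := by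
      gcongr
      · exact h.norm_feasibleCorrection_sub_le hτ hS
      · exact h.norm_dualCertificate_mul_feasibleCorrection_le hτ hS
      · exact h.norm_dualCertificate_mul_mtfaMin_le hτ h₀

end IsRMTFAMin

theorem rmtfa_tendsto_mtfa_general {ι : Type*} {l : Filter ι} {p : ℕ} {τ : ι → ℝ}
    {S L₀ D₀ : Matrix (Fin p) (Fin p) ℝ} {L D : ι → Matrix (Fin p) (Fin p) ℝ}
    (hτ : Tendsto τ l (𝓝[>] 0)) (hmin : ∀ᶠ i in l, IsRMTFAMin (τ i) S (L i) (D i))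
    (h₀ : IsMTFAMin S L₀ D₀) : Tendsto (fun i => frobNorm (L i - L₀)) l (𝓝 0) := by
  obtain ⟨hτ₀, hτpos⟩ := tendsto_nhdsWithin_iff.mp hτ
  have hbound : Tendsto
      (fun i => τ i * p ^ 2 + (τ i * p ^ 3 + √(τ i * (p ^ 3 * L₀.trace)))) l (𝓝 0) := by
    simpa using (hτ₀.mul_const _).add ((hτ₀.mul_const _).add (hτ₀.mul_const _).sqrt)
  refine squeeze_zero' (.of_forall fun _ => Real.sqrt_nonneg _) ?_ hbound
  filter_upwards [hmin, hτpos] with i hi hpos using hi.frobNorm_sub_le hpos h₀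

/-- As `τ → 0⁺`, the relaxed-MTFA solution `L̂(τ)` converges to the
MTFA solution `L̃` (minimizing `tr L` over `L ∈ S^p₊`, `D` diagonal, `Σ = L + D`). -/
theorem rmtfa_tendsto_mtfa (p : ℕ) (S : Matrix (Fin p) (Fin p) ℝ) (hS : S.PosSemidef)
    (Lhat Dhat : ℝ → Matrix (Fin p) (Fin p) ℝ)
    (hmin : ∀ τ : ℝ, 0 < τ → IsRMTFAMin τ S (Lhat τ) (Dhat τ))
    (Ltilde Dtilde : Matrix (Fin p) (Fin p) ℝ)
    (hLt : Ltilde.PosSemidef) (hDt : Dtilde = pdiag Dtilde) (hdec : S = Ltilde + Dtilde)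
    (hopt : ∀ L D : Matrix (Fin p) (Fin p) ℝ,
      L.PosSemidef → D = pdiag D → S = L + D → Ltilde.trace ≤ L.trace) :
    ∀ ε : ℝ, 0 < ε → ∃ δ : ℝ, 0 < δ ∧ ∀ τ : ℝ, 0 < τ → τ < δ →
      frobNorm (Lhat τ - Ltilde) < ε := by
  intro ε hε
  have hlim := rmtfa_tendsto_mtfa_general tendsto_id
    (eventually_mem_nhdsWithin.mono hmin) ⟨hLt, hDt, hdec, hopt⟩
  obtain ⟨δ, hδ, hlt⟩ := mem_nhdsGT_iff_exists_Ioo_subset.mp (hlim.eventually_lt_const hε)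
  exact ⟨δ, hδ, fun τ h0 h1 => hlt ⟨h0, h1⟩⟩
end

section
/- For every M ∈ S^p and τ > 0, the eigenvalue soft-thresholding D_τ^+(M) is the unique minimizer over X ∈ S^p_+ of the function X ↦ τ‖X‖_* + (1/2)‖X − M‖_F². -/
open Matrix MeasureTheory ProbabilityTheory BigOperators

/-!
On the positive semidefinite cone the nuclear norm is the trace, which is linear. Completing the
square therefore turns the objective into `(1/2) ‖X - (M - τ I)‖_F²` plus a constant, and `D_τ⁺(M)`
is the positive part `A⁺` of `A = M - τ I`. It remains to see that `A⁺` is the point of the cone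
nearest to `A`: since `A⁺ A⁻ = 0` and `tr (X A⁻) ≥ 0`, expanding `X - A = (X - A⁺) + A⁻` gives
`‖X - A‖_F² ≥ ‖X - A⁺‖_F² + ‖A⁺ - A‖_F²`, which also yields uniqueness.
-/

section Trace

variable {n 𝕜 : Type*} [Fintype n] [RCLike 𝕜] {A B : Matrix n n 𝕜}

open scoped ComplexOrder MatrixOrder in
theorem trace_mul_nonneg_of_posSemidef (hA : A.PosSemidef) (hB : B.PosSemidef) :
    0 ≤ (A * B).trace := by
  classical
  obtain ⟨C, rfl⟩ := CStarAlgebra.nonneg_iff_eq_star_mul_self.mp hA.nonneg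
  rw [Matrix.mul_assoc, trace_mul_comm]
  exact (hB.mul_mul_conjTranspose_same C).trace_nonneg

theorem trace_cfc_eq_sum_eigenvalues [DecidableEq n] (hA : A.IsHermitian) (f : ℝ → ℝ) :
    (cfc f A).trace = ∑ i, (f (hA.eigenvalues i) : 𝕜) := by
  rw [hA.cfc_eq, IsHermitian.cfc, Unitary.conjStarAlgAut_apply, trace_mul_cycle,
    Unitary.coe_star_mul_self, Matrix.one_mul, trace_diagonal]
  rfl

end Trace

section FrobeniusNorm

variable {p q : ℕ}

theorem frobNorm_sq_eq_trace (A : Matrix (Fin p) (Fin q) ℝ) : frobNorm A ^ 2 = (Aᵀ * A).trace := by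
  rw [frobNorm, Real.sq_sqrt (by positivity), Finset.sum_comm]
  simp only [trace, diag_apply, mul_apply, transpose_apply, sq]

theorem frobNorm_eq_zero_iff {A : Matrix (Fin p) (Fin q) ℝ} : frobNorm A = 0 ↔ A = 0 := by
  rw [← sq_eq_zero_iff, frobNorm_sq_eq_trace, ← conjTranspose_eq_transpose_of_trivial,
    trace_conjTranspose_mul_self_eq_zero_iff]

theorem frobNorm_add_sq (A B : Matrix (Fin p) (Fin q) ℝ) :
    frobNorm (A + B) ^ 2 = frobNorm A ^ 2 + 2 * (Aᵀ * B).trace + frobNorm B ^ 2 := by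
  have hcross : (Bᵀ * A).trace = (Aᵀ * B).trace := by
    rw [← trace_transpose, transpose_mul, transpose_transpose]
  simp only [frobNorm_sq_eq_trace, transpose_add, Matrix.add_mul, Matrix.mul_add, trace_add, hcross]
  ring

end FrobeniusNorm

section NuclearNorm

open scoped MatrixOrder

variable {p q : ℕ}

theorem nucNorm_eq_trace_sqrt (A : Matrix (Fin p) (Fin q) ℝ) :
    nucNorm A = (CFC.sqrt (Aᴴ * A)).trace := by
  have hA := posSemidef_conjTranspose_mul_self A
  rw [CFC.sqrt_eq_real_sqrt _ hA.nonneg, cfcₙ_eq_cfc, trace_cfc_eq_sum_eigenvalues hA.isHermitian]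
  rfl

theorem nucNorm_eq_trace_of_posSemidef {X : Matrix (Fin p) (Fin p) ℝ} (hX : X.PosSemidef) :
    nucNorm X = X.trace := by
  rw [nucNorm_eq_trace_sqrt, hX.isHermitian.eq, CFC.sqrt_mul_self X hX.nonneg]

theorem mul_nucNorm_add_frobNorm_sub_sq {X : Matrix (Fin p) (Fin p) ℝ} (hX : X.PosSemidef)
    (M : Matrix (Fin p) (Fin p) ℝ) (τ : ℝ) :
    τ * nucNorm X + (1 / 2) * frobNorm (X - M) ^ 2 =
      (1 / 2) * frobNorm (X - (M - τ • 1)) ^ 2 + τ * M.trace - (1 / 2) * τ ^ 2 * p := by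
  have hexpand : frobNorm (X - (M - τ • 1)) ^ 2 =
      frobNorm (X - M) ^ 2 + 2 * τ * (X.trace - M.trace) + τ ^ 2 * p := by
    rw [← sub_add, frobNorm_add_sq, frobNorm_sq_eq_trace (τ • 1)]
    simp only [transpose_sub, transpose_smul, transpose_one, Matrix.mul_smul, Matrix.mul_one,
      trace_smul, trace_sub, trace_transpose, trace_one, Fintype.card_fin, smul_eq_mul]
    ring
  rw [nucNorm_eq_trace_of_posSemidef hX, hexpand]
  ring

end NuclearNorm

section PositivePart

open scoped MatrixOrder

variable {p : ℕ} {M X : Matrix (Fin p) (Fin p) ℝ}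

theorem softThresh_eq_posPart (hM : M.IsHermitian) (τ : ℝ) :
    softThresh τ M = (M - τ • 1)⁺ := by
  have hM' : IsSelfAdjoint M := hM
  have hcfc : softThresh τ M = cfc (fun x => (x - τ)⁺) M := by
    rw [softThresh, dif_pos hM, hM.cfc_eq, IsHermitian.cfc, Unitary.conjStarAlgAut_apply]
    rfl
  have hshift : M - τ • 1 = cfc (fun x => x - τ) M := by
    rw [cfc_sub (fun x => x) (fun _ => τ) M, cfc_id' ℝ M, cfc_const τ M,
      Algebra.algebraMap_eq_smul_one]
  rw [hcfc, hshift, CFC.posPart_def, cfcₙ_eq_cfc, ← cfc_comp' (·⁺) (fun x => x - τ) M]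

theorem frobNorm_sub_posPart_sq_add_le {A : Matrix (Fin p) (Fin p) ℝ} (hA : A.IsHermitian)
    (hX : X.PosSemidef) :
    frobNorm (X - A⁺) ^ 2 + frobNorm (A⁺ - A) ^ 2 ≤ frobNorm (X - A) ^ 2 := by
  have hpos : A⁺.PosSemidef := (CFC.posPart_nonneg A).posSemidef
  have hneg : A⁻.PosSemidef := (CFC.negPart_nonneg A).posSemidef
  have hdecomp : A⁺ - A⁻ = A := CFC.posPart_sub_negPart A hA
  have hgap : A⁺ - A = A⁻ := by rw [sub_eq_iff_eq_add', ← sub_eq_iff_eq_add, hdecomp]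
  have hcross : 0 ≤ ((X - A⁺)ᵀ * A⁻).trace := by
    have hsymm : (X - A⁺)ᵀ = X - A⁺ := (hX.isHermitian.sub hpos.isHermitian).eq
    rw [hsymm, Matrix.sub_mul, CFC.posPart_mul_negPart, sub_zero]
    exact trace_mul_nonneg_of_posSemidef hX hneg
  have hexpand := frobNorm_add_sq (X - A⁺) (A⁺ - A)
  rw [sub_add_sub_cancel, hgap] at hexpand
  rw [hgap]
  linarith

theorem softThresh_posSemidef (hM : M.IsHermitian) (τ : ℝ) : (softThresh τ M).PosSemidef := by
  rw [softThresh_eq_posPart hM]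
  exact (CFC.posPart_nonneg _).posSemidef

theorem quadratic_growth_softThresh (hM : M.IsHermitian) (τ : ℝ) (hX : X.PosSemidef) :
    τ * nucNorm (softThresh τ M) + (1 / 2) * frobNorm (softThresh τ M - M) ^ 2 +
        (1 / 2) * frobNorm (X - softThresh τ M) ^ 2 ≤
      τ * nucNorm X + (1 / 2) * frobNorm (X - M) ^ 2 := by
  have hshift : (M - τ • 1).IsHermitian := hM.sub (isHermitian_one.smul (.all τ))
  have hproj := frobNorm_sub_posPart_sq_add_le hshift hX
  rw [mul_nucNorm_add_frobNorm_sub_sq (softThresh_posSemidef hM τ),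
    mul_nucNorm_add_frobNorm_sub_sq hX, softThresh_eq_posPart hM]
  linarith

end PositivePart

theorem softThresh_is_unique_min_general (p : ℕ) (M : Matrix (Fin p) (Fin p) ℝ)
    (hM : M.IsHermitian) (τ : ℝ) :
    (softThresh τ M).PosSemidef ∧
    (∀ X : Matrix (Fin p) (Fin p) ℝ, X.PosSemidef →
      τ * nucNorm (softThresh τ M) + (1 / 2) * (frobNorm (softThresh τ M - M)) ^ 2 ≤
        τ * nucNorm X + (1 / 2) * (frobNorm (X - M)) ^ 2) ∧
    (∀ X : Matrix (Fin p) (Fin p) ℝ, X.PosSemidef →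
      (∀ Y : Matrix (Fin p) (Fin p) ℝ, Y.PosSemidef →
        τ * nucNorm X + (1 / 2) * (frobNorm (X - M)) ^ 2 ≤
          τ * nucNorm Y + (1 / 2) * (frobNorm (Y - M)) ^ 2) →
      X = softThresh τ M) := by
  refine ⟨softThresh_posSemidef hM τ, fun X hX => ?_, fun X hX hmin => ?_⟩
  · have hgrowth := quadratic_growth_softThresh hM τ hX
    have hdist := sq_nonneg (frobNorm (X - softThresh τ M))
    linarith
  · have hgrowth := quadratic_growth_softThresh hM τ hX
    have hopt := hmin _ (softThresh_posSemidef hM τ)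
    have hdist : frobNorm (X - softThresh τ M) ^ 2 ≤ 0 := by linarith
    exact sub_eq_zero.mp (frobNorm_eq_zero_iff.mp ((sq_nonpos_iff _).mp hdist))

/-- for `M ∈ S^p` and `τ > 0`, the eigenvalue soft-thresholding `D_τ⁺(M)` is
the unique minimizer over `X ∈ S^p₊` of `X ↦ τ‖X‖_* + (1/2)‖X − M‖_F²`. -/
theorem softThresh_is_unique_min (p : ℕ) (M : Matrix (Fin p) (Fin p) ℝ)
    (hM : M.IsHermitian) (τ : ℝ) (hτ : 0 < τ) :
    (softThresh τ M).PosSemidef ∧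
    (∀ X : Matrix (Fin p) (Fin p) ℝ, X.PosSemidef →
      τ * nucNorm (softThresh τ M) + (1 / 2) * (frobNorm (softThresh τ M - M)) ^ 2 ≤
        τ * nucNorm X + (1 / 2) * (frobNorm (X - M)) ^ 2) ∧
    (∀ X : Matrix (Fin p) (Fin p) ℝ, X.PosSemidef →
      (∀ Y : Matrix (Fin p) (Fin p) ℝ, Y.PosSemidef →
        τ * nucNorm X + (1 / 2) * (frobNorm (X - M)) ^ 2 ≤
          τ * nucNorm Y + (1 / 2) * (frobNorm (Y - M)) ^ 2) →
      X = softThresh τ M) :=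
  softThresh_is_unique_min_general p M hM τ
end
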